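/- Let F be a Ferrers diagram of semiperimeter n+1, T ∈ EWtab(F), S = S(T) its supplementary tableau, and CanonTop(φ_TC(T)) = (U^0, V^1, U^1, …). If j ∈ cols(F) lies in V^ℓ and k ∈ rows(F) satisfies k < j, then k ∈ U^{ℓ−1} if and only if S_{kj} = 1 and this 1 (which, since k < j, is the entry T_{kj} of a cell of T) is not a cornersupport entry. -/

import Mathlib

open Classical

/-- A Ferrers diagram of semiperimeter `n + 1`, encoded by the set of its row labels
(labels `0, …, n` run along the south-east border; `0` labels the top row and the
last label `n` is a column label). -/
structure Ferrers (n : ℕ) where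
  rows : Finset (Fin (n + 1))
  zero_mem : 0 ∈ rows
  last_not_mem : Fin.last n ∉ rows

namespace Ferrers

/-- `(i, j)` is a cell of the diagram: `i` is a row label, `j` a column label, `i < j`. -/
def Cell {n : ℕ} (F : Ferrers n) (i j : Fin (n + 1)) : Prop :=
  i ∈ F.rows ∧ j ∉ F.rows ∧ i < j

/-- Adjacency in the Ferrers graph `G(F)`. -/
def Adj {n : ℕ} (F : Ferrers n) (u v : Fin (n + 1)) : Prop :=
  F.Cell u v ∨ F.Cell v u

/-- Degree of a vertex in `G(F)`. -/
noncomputable def deg {n : ℕ} (F : Ferrers n) (v : Fin (n + 1)) : ℕ :=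
  {u | F.Adj v u}.ncard

/-- Toppling a single vertex.  The height at the sink `0` is kept equal to `c 0`
(grains sent to the sink vanish); toppling the sink sends one grain to each of
its neighbours. -/
noncomputable def topple {n : ℕ} (F : Ferrers n) (c : Fin (n + 1) → ℕ)
    (v : Fin (n + 1)) : Fin (n + 1) → ℕ :=
  fun u =>
    if u = 0 then c 0
    else if u = v then c v - F.deg v
    else if F.Adj v u then c u + 1
    else c u

/-- Toppling the vertices of a list in order. -/
noncomputable def toppleList {n : ℕ} (F : Ferrers n) (c : Fin (n + 1) → ℕ)
    (l : List (Fin (n + 1))) : Fin (n + 1) → ℕ :=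
  l.foldl F.topple c

/-- Simultaneous toppling of a set of vertices. -/
noncomputable def toppleSet {n : ℕ} (F : Ferrers n) (c : Fin (n + 1) → ℕ)
    (S : Set (Fin (n + 1))) : Fin (n + 1) → ℕ :=
  fun u =>
    if u = 0 then c 0
    else c u + {w ∈ S | F.Adj w u}.ncard - if u ∈ S then F.deg u else 0

/-- A configuration is stable if every non-sink vertex has fewer grains than its degree. -/
def Stable {n : ℕ} (F : Ferrers n) (c : Fin (n + 1) → ℕ) : Prop :=
  ∀ v, v ≠ 0 → c v < F.deg v

/-- A Dhar (burning) ordering for `c`: an ordering `v₀ = 0, v₁, …, vₙ` of all the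
vertices such that each `vᵢ` (`i ≥ 1`) is unstable after toppling `v₀, …, v_{i-1}`. -/
def DharSeq {n : ℕ} (F : Ferrers n) (c : Fin (n + 1) → ℕ) (l : List (Fin (n + 1))) : Prop :=
  l.length = n + 1 ∧ l.Nodup ∧ l.head? = some 0 ∧
    ∀ i, ∀ h : i < l.length, 1 ≤ i →
      F.deg (l.get ⟨i, h⟩) ≤ F.toppleList c (l.take i) (l.get ⟨i, h⟩)

/-- Recurrent configurations (via Dhar's criterion).  The height at the sink is
normalised to `0`. -/
def Recurrent {n : ℕ} (F : Ferrers n) (c : Fin (n + 1) → ℕ) : Prop :=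
  c 0 = 0 ∧ F.Stable c ∧ ∃ l, F.DharSeq c l

/-- Minimal recurrent configurations: recurrent with minimal total number of grains. -/
def RecMin {n : ℕ} (F : Ferrers n) (c : Fin (n + 1) → ℕ) : Prop :=
  F.Recurrent c ∧ ∀ c', F.Recurrent c' → (∑ v, c v) ≤ ∑ v, c' v

/-- Canonical toppling: block `0` is `{0}` (the sink); from then on, blocks with odd
index are the sets of currently unstable column vertices and blocks with even index
the sets of currently unstable row vertices.  The first component is the configuration
just before toppling the block recorded in the second component. -/
noncomputable def canonAux {n : ℕ} (F : Ferrers n) (c : Fin (n + 1) → ℕ) :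
    ℕ → ((Fin (n + 1) → ℕ) × Set (Fin (n + 1)))
  | 0 => (c, {0})
  | k + 1 =>
    let c' := F.toppleSet (canonAux F c k).1 (canonAux F c k).2
    (c', {v | v ≠ 0 ∧ (if k % 2 = 0 then v ∉ F.rows else v ∈ F.rows) ∧ F.deg v ≤ c' v})

/-- The `k`-th block of the canonical toppling of `c`:
`canonTop F c 0 = U⁰ = {0}`, `canonTop F c (2i-1) = Vⁱ`, `canonTop F c (2i) = Uⁱ`. -/
noncomputable def canonTop {n : ℕ} (F : Ferrers n) (c : Fin (n + 1) → ℕ) (k : ℕ) :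
    Set (Fin (n + 1)) :=
  (F.canonAux c k).2

/-- The configuration just before toppling the `k`-th block of the canonical toppling. -/
noncomputable def canonConfig {n : ℕ} (F : Ferrers n) (c : Fin (n + 1) → ℕ) (k : ℕ) :
    Fin (n + 1) → ℕ :=
  (F.canonAux c k).1

/-- The index of the block of the canonical toppling of `c` containing `v`. -/
noncomputable def bIdx {n : ℕ} (F : Ferrers n) (c : Fin (n + 1) → ℕ) (v : Fin (n + 1)) : ℕ :=
  sInf {k | v ∈ F.canonTop c k}

/-- `T` is a EW-tableau on `F` (entries of non-cells are normalised to `false`):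
the top row contains only `1`s, every other row contains a `0`, and there is no
rectangle with two diagonally opposite `0`s and two `1`s in the other corners. -/
def IsEW {n : ℕ} (F : Ferrers n) (T : Fin (n + 1) → Fin (n + 1) → Bool) : Prop :=
  (∀ i j, ¬F.Cell i j → T i j = false) ∧
  (∀ j, F.Cell 0 j → T 0 j = true) ∧
  (∀ i, i ∈ F.rows → i ≠ 0 → ∃ j, F.Cell i j ∧ T i j = false) ∧
  (∀ i i' j j', F.Cell i j → F.Cell i j' → F.Cell i' j → F.Cell i' j' →
    T i j = T i' j' → T i j' = T i' j → T i j = T i j')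

/-- The configuration associated to a tableau: row vertices count the `1`s in their
row, column vertices count the `0`s in their column (the sink is normalised to `0`). -/
noncomputable def phiTC {n : ℕ} (F : Ferrers n) (T : Fin (n + 1) → Fin (n + 1) → Bool) :
    Fin (n + 1) → ℕ :=
  fun v =>
    if v = 0 then 0
    else if v ∈ F.rows then {j | F.Cell v j ∧ T v j = true}.ncard
    else {i | F.Cell i v ∧ T i v = false}.ncard

/-- The tableau associated to a (minimal recurrent) configuration: a cell `(i, j)`
gets a `1` exactly when `i` lies in an earlier block than `j` in the canonical
toppling of `c`. -/
noncomputable def phiCT {n : ℕ} (F : Ferrers n) (c : Fin (n + 1) → ℕ) :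
    Fin (n + 1) → Fin (n + 1) → Bool :=
  fun i j => if F.Cell i j ∧ F.bIdx c i < F.bIdx c j then true else false

/-- The supplementary tableau of `T`: `S i j = 1` exactly when the row vertex `i`
lies in an earlier block than the column vertex `j` in `CanonTop (φ_TC T)`. -/
noncomputable def suppS {n : ℕ} (F : Ferrers n) (T : Fin (n + 1) → Fin (n + 1) → Bool)
    (i j : Fin (n + 1)) : Bool :=
  if F.bIdx (F.phiTC T) i < F.bIdx (F.phiTC T) j then true else false

/-- The entry of `T` in cell `(j, k)` is a cornersupport entry. -/
def Cornersupport {n : ℕ} (F : Ferrers n) (T : Fin (n + 1) → Fin (n + 1) → Bool)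
    (j k : Fin (n + 1)) : Prop :=
  ∃ j' k', j' ∈ F.rows ∧ k' ∉ F.rows ∧ j' ≠ j ∧ k' ≠ k ∧
    F.suppS T j' k' = !(T j k) ∧ F.suppS T j' k = T j k ∧ F.suppS T j k' = T j k

/-- `ν_v(T)`: the number of non-cornersupport `0`s in row `v` (if `v` is a row label),
resp. non-cornersupport `1`s in column `v` (if `v` is a column label). -/
noncomputable def nu {n : ℕ} (F : Ferrers n) (T : Fin (n + 1) → Fin (n + 1) → Bool)
    (v : Fin (n + 1)) : ℕ :=
  if v ∈ F.rows then {k | F.Cell v k ∧ T v k = false ∧ ¬F.Cornersupport T v k}.ncard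
  else {i | F.Cell i v ∧ T i v = true ∧ ¬F.Cornersupport T i v}.ncard

/-- `μ_v(c)`: if `v ∈ Uⁱ`, the number of `k ∈ Vⁱ` with `k > v`; if `v ∈ Vⁱ`,
the number of `k ∈ U^{i-1}` with `k < v`.  In both cases the relevant block is the
one immediately preceding the block of `v`. -/
noncomputable def mu {n : ℕ} (F : Ferrers n) (c : Fin (n + 1) → ℕ) (v : Fin (n + 1)) : ℕ :=
  if v ∈ F.rows then {k | v < k ∧ k ∈ F.canonTop c (F.bIdx c v - 1)}.ncard
  else {k | k < v ∧ k ∈ F.canonTop c (F.bIdx c v - 1)}.ncard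

/-- The minimal recurrent configuration with the same canonical toppling as `c`:
if `j ∈ Uⁱ` then `minrec c j = |{ℓ ∈ Vᵏ : j < ℓ, k > i}|`, and if `j ∈ Vⁱ` then
`minrec c j = |{ℓ ∈ Uᵏ : ℓ < j, k ≥ i}|` (blocks `Vᵏ` sit at odd index `2k - 1`,
blocks `Uᵏ` at even index `2k`). -/
noncomputable def minrecFun {n : ℕ} (F : Ferrers n) (c : Fin (n + 1) → ℕ) :
    Fin (n + 1) → ℕ :=
  fun j =>
    if j = 0 then 0
    else if j ∈ F.rows then
      {l | j < l ∧ ∃ k, F.bIdx c j < 2 * k + 1 ∧ l ∈ F.canonTop c (2 * k + 1)}.ncard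
    else
      {l | l < j ∧ ∃ k, F.bIdx c j < 2 * k ∧ l ∈ F.canonTop c (2 * k)}.ncard

/-- The number of edges of `G(F)` (equivalently, the number of cells of `F`). -/
noncomputable def edgeCount {n : ℕ} (F : Ferrers n) : ℕ :=
  {p : Fin (n + 1) × Fin (n + 1) | F.Cell p.1 p.2}.ncard

end Ferrers

namespace Ferrers

variable {n : ℕ} {F : Ferrers n} {T : Fin (n + 1) → Fin (n + 1) → Bool}

/-- The orientation of the Ferrers graph defined by a tableau: a cell `(i, j)` with entry `1`
is oriented from `i` to `j`, and a cell with entry `0` from `j` to `i`. -/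
def Arc (F : Ferrers n) (T : Fin (n + 1) → Fin (n + 1) → Bool) (u v : Fin (n + 1)) : Prop :=
  (F.Cell u v ∧ T u v = true) ∨ (F.Cell v u ∧ T v u = false)

/-- The vertices toppled strictly before block `k` of the canonical toppling. -/
def toppledBefore (F : Ferrers n) (c : Fin (n + 1) → ℕ) (k : ℕ) : Set (Fin (n + 1)) :=
  {v | ∃ i < k, v ∈ F.canonTop c i}

theorem Arc.adj {u v : Fin (n + 1)} (h : F.Arc T u v) : F.Adj u v :=
  h.imp And.left And.left

theorem Adj.symm {u v : Fin (n + 1)} (h : F.Adj u v) : F.Adj v u :=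
  Or.symm h

theorem Adj.arc_or_arc {u v : Fin (n + 1)} (h : F.Adj u v) : F.Arc T u v ∨ F.Arc T v u := by
  unfold Arc
  rcases h with h | h
  · cases hT : T u v <;> simp [h]
  · cases hT : T v u <;> simp [h]

theorem Adj.mem_rows_iff {u v : Fin (n + 1)} (h : F.Adj u v) : u ∈ F.rows ↔ v ∉ F.rows := by
  rcases h with ⟨h, h', -⟩ | ⟨h, h', -⟩ <;> simp [h, h']

theorem Arc.asymm {u v : Fin (n + 1)} (h : F.Arc T u v) : ¬F.Arc T v u := by
  unfold Arc Cell at *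
  grind

theorem IsEW.exists_arc (hT : F.IsEW T) {v : Fin (n + 1)} (hv : v ≠ 0) : ∃ u, F.Arc T u v := by
  by_cases hr : v ∈ F.rows
  · obtain ⟨j, hj⟩ := hT.2.2.1 v hr hv
    exact ⟨j, Or.inr hj⟩
  · have hc : F.Cell 0 v := ⟨F.zero_mem, hr, Fin.pos_of_ne_zero hv⟩
    exact ⟨0, Or.inl ⟨hc, hT.2.1 v hc⟩⟩

/-- The orientation defined by an EW-tableau is acyclic: no nonempty set of vertices contains
an in-neighbour of each of its members. -/
theorem IsEW.eq_empty_of_forall_exists_arc (hT : F.IsEW T) (X : Finset (Fin (n + 1)))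
    (hX : ∀ v ∈ X, ∃ u ∈ X, F.Arc T u v) : X = ∅ := by
  induction X using Finset.strongInduction with
  | H X ih =>
  by_contra hne
  have hrow : (X.filter (· ∈ F.rows)).Nonempty := by
    obtain ⟨v, hv⟩ := Finset.nonempty_iff_ne_empty.mpr hne
    obtain ⟨u, hu, huv⟩ := hX v hv
    have := huv.adj.mem_rows_iff
    by_cases hr : v ∈ F.rows
    · exact ⟨v, by simp [hv, hr]⟩
    · exact ⟨u, by simp [hu, this, hr]⟩
  -- The last row `m` of `X` is redundant: the row `i` below serves all the columns `m` serves.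
  obtain ⟨m, hm, hmax⟩ := Finset.exists_max_image _ id hrow
  simp only [Finset.mem_filter, id] at hm hmax
  obtain ⟨j, hj, hjm⟩ := hX m hm.1
  obtain ⟨i, hi, hij⟩ := hX j hj
  have hjm' : F.Cell m j ∧ T m j = false := by
    unfold Arc Cell at *
    grind
  have hij' : F.Cell i j ∧ T i j = true := by
    unfold Arc Cell at *
    grind
  have him : i ≠ m := by
    rintro rfl
    simp_all
  have hile : i ≤ m := hmax i ⟨hi, hij'.1.1⟩
  have key : ∀ v, F.Arc T m v → F.Arc T i v := by
    intro v hv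
    have hv' : F.Cell m v ∧ T m v = true := by
      unfold Arc Cell at *
      grind
    have hiv : F.Cell i v := ⟨hij'.1.1, hv'.1.2.1, hile.trans_lt hv'.1.2.2⟩
    refine Or.inl ⟨hiv, ?_⟩
    by_contra hf
    have := hT.2.2.2 m i j v hjm'.1 hv'.1 hij'.1 hiv
    simp_all
  have hempty := ih (X.erase m) (Finset.erase_ssubset hm.1) (by
    intro v hv
    obtain ⟨u, hu, huv⟩ := hX v (Finset.mem_of_mem_erase hv)
    by_cases hum : u = m
    · exact ⟨i, Finset.mem_erase.mpr ⟨him, hi⟩, key v (hum ▸ huv)⟩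
    · exact ⟨u, Finset.mem_erase.mpr ⟨hum, hu⟩, huv⟩)
  exact Finset.notMem_empty i (hempty ▸ Finset.mem_erase.mpr ⟨him, hi⟩)

theorem phiTC_eq_ncard_arc {v : Fin (n + 1)} (hv : v ≠ 0) :
    F.phiTC T v = {w | F.Arc T v w}.ncard := by
  unfold phiTC
  rw [if_neg hv]
  split_ifs with hr <;> congr 1 <;> ext w <;> simp only [Set.mem_ofPred_eq, Arc, Cell] <;> grind

theorem phiTC_add_ncard_arc {v : Fin (n + 1)} (hv : v ≠ 0) :
    F.phiTC T v + {w | F.Arc T w v}.ncard = F.deg v := by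
  rw [phiTC_eq_ncard_arc hv, deg, ← Set.ncard_union_eq _ (Set.toFinite _) (Set.toFinite _)]
  · congr 1
    ext w
    exact ⟨fun h => h.elim Arc.adj fun h => h.adj.symm, fun h => h.arc_or_arc⟩
  · exact Set.disjoint_left.mpr fun w h h' => Arc.asymm h h'

theorem toppledBefore_succ (c : Fin (n + 1) → ℕ) (k : ℕ) :
    F.toppledBefore c (k + 1) = F.toppledBefore c k ∪ F.canonTop c k := by
  ext v
  simp only [toppledBefore, Set.mem_ofPred_eq, Set.mem_union, Nat.lt_succ_iff_lt_or_eq]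
  grind

theorem mem_canonTop_zero {c : Fin (n + 1) → ℕ} {v : Fin (n + 1)} :
    v ∈ F.canonTop c 0 ↔ v = 0 :=
  Iff.rfl

theorem mem_canonTop_succ {c : Fin (n + 1) → ℕ} {k : ℕ} {v : Fin (n + 1)} :
    v ∈ F.canonTop c (k + 1) ↔
      v ≠ 0 ∧ (v ∈ F.rows ↔ Even (k + 1)) ∧ F.deg v ≤ F.canonConfig c (k + 1) v := by
  have : v ∈ F.canonTop c (k + 1) ↔ v ≠ 0 ∧ (if k % 2 = 0 then v ∉ F.rows else v ∈ F.rows) ∧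
      F.deg v ≤ F.canonConfig c (k + 1) v := Iff.rfl
  rw [this, Nat.even_add_one, Nat.even_iff]
  split_ifs with h <;> simp [h]

theorem mem_rows_iff_even {c : Fin (n + 1) → ℕ} {k : ℕ} {v : Fin (n + 1)}
    (h : v ∈ F.canonTop c k) : v ∈ F.rows ↔ Even k := by
  cases k with
  | zero => simp [mem_canonTop_zero.mp h, F.zero_mem]
  | succ k => exact (mem_canonTop_succ.mp h).2.1

theorem deg_le_canonConfig {c : Fin (n + 1) → ℕ} {k : ℕ} {v : Fin (n + 1)}
    (h : v ∈ F.canonTop c k) (hv : v ≠ 0) : F.deg v ≤ F.canonConfig c k v := by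
  cases k with
  | zero => exact absurd h hv
  | succ k => exact (mem_canonTop_succ.mp h).2.2

theorem canonConfig_succ (c : Fin (n + 1) → ℕ) (k : ℕ) {v : Fin (n + 1)} (hv : v ≠ 0) :
    F.canonConfig c (k + 1) v + (if v ∈ F.canonTop c k then F.deg v else 0) =
      F.canonConfig c k v + {w ∈ F.canonTop c k | F.Adj w v}.ncard := by
  have h : F.canonConfig c (k + 1) v = F.canonConfig c k v +
      {w ∈ F.canonTop c k | F.Adj w v}.ncard - if v ∈ F.canonTop c k then F.deg v else 0 :=
    if_neg hv
  rw [h]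
  split_ifs with hm
  · have := deg_le_canonConfig hm hv
    omega
  · simp

/-- If the toppled set `D` is closed under in-neighbours and each of its members was toppled
once, a vertex is unstable exactly when it lies outside `D` while its in-neighbours lie in `D`. -/
theorem IsEW.deg_le_iff (hT : F.IsEW T) {D : Set (Fin (n + 1))}
    (hD : ∀ u v, F.Arc T u v → v ∈ D → u ∈ D) {v : Fin (n + 1)} (hv : v ≠ 0) {x : ℕ}
    (hx : x + (if v ∈ D then F.deg v else 0) = F.phiTC T v + {w ∈ D | F.Adj w v}.ncard) :
    F.deg v ≤ x ↔ v ∉ D ∧ ∀ u, F.Arc T u v → u ∈ D := by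
  have hdeg := F.phiTC_add_ncard_arc (T := T) hv
  by_cases hvD : v ∈ D
  · simp only [hvD, if_true, not_true, false_and, iff_false, not_le] at hx ⊢
    have hle : {w ∈ D | F.Adj w v}.ncard ≤ F.deg v :=
      Set.ncard_le_ncard (fun w hw => hw.2.symm) (Set.toFinite _)
    have hpos : 0 < {w | F.Arc T w v}.ncard :=
      (Set.ncard_pos (Set.toFinite _)).mpr (hT.exists_arc hv)
    omega
  · simp only [hvD, if_false, add_zero, not_false_iff, true_and] at hx ⊢
    have hsub : {w ∈ D | F.Adj w v} ⊆ {w | F.Arc T w v} := fun w hw =>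
      hw.2.arc_or_arc.resolve_right fun h => hvD (hD _ _ h hw.1)
    constructor
    · intro hle u hu
      have := Set.eq_of_subset_of_ncard_le hsub (by omega) (Set.toFinite _)
      exact (this.symm.subset hu).1
    · intro h
      have : {w ∈ D | F.Adj w v} = {w | F.Arc T w v} :=
        hsub.antisymm fun w hw => ⟨h w hw, hw.adj⟩
      rw [this] at hx
      omega

theorem IsEW.canonTop_invariant (hT : F.IsEW T) (k : ℕ) :
    (∀ v, v ≠ 0 → F.canonConfig (F.phiTC T) k v +
        (if v ∈ F.toppledBefore (F.phiTC T) k then F.deg v else 0) =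
      F.phiTC T v + {w ∈ F.toppledBefore (F.phiTC T) k | F.Adj w v}.ncard) ∧
    (∀ u v, F.Arc T u v → v ∈ F.toppledBefore (F.phiTC T) k →
      u ∈ F.toppledBefore (F.phiTC T) k) ∧
    ∀ v ∈ F.canonTop (F.phiTC T) k, v ∉ F.toppledBefore (F.phiTC T) k ∧
      ∀ u, F.Arc T u v → u ∈ F.toppledBefore (F.phiTC T) k := by
  induction k with
  | zero =>
    have h0 : F.toppledBefore (F.phiTC T) 0 = ∅ := by
      simp [toppledBefore]
    simp only [h0]
    refine ⟨fun v _ => by simp [canonConfig, canonAux], by simp, fun v hv => ⟨by simp, ?_⟩⟩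
    rintro u hu
    obtain rfl := mem_canonTop_zero.mp hv
    rcases hu with hu | hu
    · exact absurd hu.1.2.2 (Fin.not_lt_zero u)
    · exact absurd (hT.2.1 u hu.1) (by simp [hu.2])
  | succ k ih =>
    obtain ⟨hconf, hclosed, hblock⟩ := ih
    have hconf' : ∀ v, v ≠ 0 → F.canonConfig (F.phiTC T) (k + 1) v +
        (if v ∈ F.toppledBefore (F.phiTC T) (k + 1) then F.deg v else 0) =
        F.phiTC T v + {w ∈ F.toppledBefore (F.phiTC T) (k + 1) | F.Adj w v}.ncard := by
      intro v hv
      have hunion : {w ∈ F.toppledBefore (F.phiTC T) (k + 1) | F.Adj w v} =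
          {w ∈ F.toppledBefore (F.phiTC T) k | F.Adj w v} ∪
            {w ∈ F.canonTop (F.phiTC T) k | F.Adj w v} := by
        rw [toppledBefore_succ]
        ext w
        simp only [Set.mem_ofPred_eq, Set.mem_union]
        tauto
      have hdisj : Disjoint {w ∈ F.toppledBefore (F.phiTC T) k | F.Adj w v}
          {w ∈ F.canonTop (F.phiTC T) k | F.Adj w v} :=
        Set.disjoint_left.mpr fun w h h' => (hblock w h'.1).1 h.1
      rw [hunion, Set.ncard_union_eq hdisj (Set.toFinite _) (Set.toFinite _), toppledBefore_succ]
      have h1 := hconf v hv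
      have h2 := F.canonConfig_succ (F.phiTC T) k hv
      have h3 := fun h => (hblock v h).1
      simp only [Set.mem_union]
      by_cases hA : v ∈ F.toppledBefore (F.phiTC T) k <;>
        by_cases hB : v ∈ F.canonTop (F.phiTC T) k <;> simp [hA, hB] at h1 h2 h3 ⊢ <;> omega
    have hclosed' : ∀ u v, F.Arc T u v → v ∈ F.toppledBefore (F.phiTC T) (k + 1) →
        u ∈ F.toppledBefore (F.phiTC T) (k + 1) := by
      rw [toppledBefore_succ]
      rintro u v huv (hv | hv)
      · exact Or.inl (hclosed u v huv hv)
      · exact Or.inl ((hblock v hv).2 u huv)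
    refine ⟨hconf', hclosed', fun v hv => ?_⟩
    obtain ⟨hv0, -, hdeg⟩ := mem_canonTop_succ.mp hv
    exact (hT.deg_le_iff hclosed' hv0 (hconf' v hv0)).mp hdeg

theorem IsEW.mem_canonTop_succ_iff (hT : F.IsEW T) {k : ℕ} {v : Fin (n + 1)} :
    v ∈ F.canonTop (F.phiTC T) (k + 1) ↔ v ≠ 0 ∧ (v ∈ F.rows ↔ Even (k + 1)) ∧
      v ∉ F.toppledBefore (F.phiTC T) (k + 1) ∧
      ∀ u, F.Arc T u v → u ∈ F.toppledBefore (F.phiTC T) (k + 1) := by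
  obtain ⟨hconf, hclosed, -⟩ := hT.canonTop_invariant (k + 1)
  rw [mem_canonTop_succ]
  refine and_congr_right fun hv => and_congr_right fun _ => ?_
  exact hT.deg_le_iff hclosed hv (hconf v hv)

/-- Every vertex is toppled in the canonical toppling of `φ_TC T`. -/
theorem IsEW.exists_mem_canonTop (hT : F.IsEW T) (v : Fin (n + 1)) :
    ∃ k, v ∈ F.canonTop (F.phiTC T) k := by
  by_contra hv
  have hX := hT.eq_empty_of_forall_exists_arc
    (Finset.univ.filter fun v => ¬∃ k, v ∈ F.canonTop (F.phiTC T) k) (by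
      intro w hw
      simp only [Finset.mem_filter, Finset.mem_univ, true_and] at hw ⊢
      by_contra hpred
      have hmem : ∀ u, F.Arc T u w → ∃ k, u ∈ F.canonTop (F.phiTC T) k := fun u hu =>
        by_contra fun h => hpred ⟨u, h, hu⟩
      choose! f hf using hmem
      obtain ⟨N, hN⟩ := (Set.finite_range f).bddAbove
      have hbelow : ∀ k, N < k → ∀ u, F.Arc T u w → u ∈ F.toppledBefore (F.phiTC T) k :=
        fun k hk u hu => ⟨f u, (hN ⟨u, rfl⟩).trans_lt hk, hf u hu⟩
      have hnot : ∀ k, w ∉ F.toppledBefore (F.phiTC T) k := fun k ⟨i, _, hi⟩ => hw ⟨i, hi⟩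
      have hw0 : w ≠ 0 := by
        rintro rfl
        exact hw ⟨0, mem_canonTop_zero.mpr rfl⟩
      by_cases hr : w ∈ F.rows
      · refine hw ⟨2 * N + 1 + 1, hT.mem_canonTop_succ_iff.mpr
          ⟨hw0, ?_, hnot _, hbelow _ (by omega)⟩⟩
        simp [hr, Nat.even_add]
      · refine hw ⟨2 * N + 1, hT.mem_canonTop_succ_iff.mpr
          ⟨hw0, ?_, hnot _, hbelow _ (by omega)⟩⟩
        simp [hr])
  exact Finset.notMem_empty v (hX ▸ by simpa using hv)

theorem IsEW.bIdx_eq (hT : F.IsEW T) {k : ℕ} {v : Fin (n + 1)}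
    (h : v ∈ F.canonTop (F.phiTC T) k) : F.bIdx (F.phiTC T) v = k := by
  have hmem : v ∈ F.canonTop (F.phiTC T) (F.bIdx (F.phiTC T) v) :=
    Nat.sInf_mem (s := {k | v ∈ F.canonTop (F.phiTC T) k}) ⟨k, h⟩
  refine le_antisymm (Nat.sInf_le h) (not_lt.mp fun hlt => ?_)
  exact ((hT.canonTop_invariant k).2.2 v h).1 ⟨_, hlt, hmem⟩

theorem IsEW.mem_canonTop_iff (hT : F.IsEW T) {k : ℕ} {v : Fin (n + 1)} :
    v ∈ F.canonTop (F.phiTC T) k ↔ F.bIdx (F.phiTC T) v = k := by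
  refine ⟨hT.bIdx_eq, ?_⟩
  rintro rfl
  exact Nat.sInf_mem (s := {k | v ∈ F.canonTop (F.phiTC T) k}) (hT.exists_mem_canonTop v)

theorem IsEW.mem_toppledBefore_iff (hT : F.IsEW T) {k : ℕ} {v : Fin (n + 1)} :
    v ∈ F.toppledBefore (F.phiTC T) k ↔ F.bIdx (F.phiTC T) v < k := by
  simp [toppledBefore, hT.mem_canonTop_iff]

theorem IsEW.mem_rows_iff_even_bIdx (hT : F.IsEW T) (v : Fin (n + 1)) :
    v ∈ F.rows ↔ Even (F.bIdx (F.phiTC T) v) :=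
  mem_rows_iff_even (hT.mem_canonTop_iff.mpr rfl)

theorem IsEW.bIdx_lt_of_arc (hT : F.IsEW T) {u v : Fin (n + 1)} (h : F.Arc T u v) :
    F.bIdx (F.phiTC T) u < F.bIdx (F.phiTC T) v :=
  hT.mem_toppledBefore_iff.mp
    (((hT.canonTop_invariant _).2.2 v (hT.mem_canonTop_iff.mpr rfl)).2 u h)

theorem suppS_eq_true_iff {u v : Fin (n + 1)} :
    F.suppS T u v = true ↔ F.bIdx (F.phiTC T) u < F.bIdx (F.phiTC T) v := by
  simp [suppS]

theorem suppS_eq_false_iff {u v : Fin (n + 1)} :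
    F.suppS T u v = false ↔ F.bIdx (F.phiTC T) v ≤ F.bIdx (F.phiTC T) u := by
  simp [suppS]

/-- On the cells of the diagram the supplementary tableau agrees with the tableau. -/
theorem IsEW.suppS_eq (hT : F.IsEW T) {i j : Fin (n + 1)} (h : F.Cell i j) :
    F.suppS T i j = T i j := by
  cases hij : T i j
  · exact suppS_eq_false_iff.mpr (hT.bIdx_lt_of_arc (Or.inr ⟨h, hij⟩)).le
  · exact suppS_eq_true_iff.mpr (hT.bIdx_lt_of_arc (Or.inl ⟨h, hij⟩))

/-- A vertex toppled after block `1` has an in-neighbour in the block just before its own. -/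
theorem IsEW.exists_bIdx_eq_succ (hT : F.IsEW T) {m : ℕ} {v : Fin (n + 1)}
    (h : F.bIdx (F.phiTC T) v = m + 2) : ∃ u, F.Arc T u v ∧ F.bIdx (F.phiTC T) u = m + 1 := by
  have hblock := hT.mem_canonTop_iff.mpr h
  have hrow := hT.mem_rows_iff_even_bIdx v
  obtain ⟨hv0, -, -⟩ := mem_canonTop_succ.mp hblock
  obtain ⟨u, huv, hu⟩ : ∃ u, F.Arc T u v ∧ m ≤ F.bIdx (F.phiTC T) u := by
    by_contra! hall
    cases m with
    | zero =>
      obtain ⟨u, hu⟩ := hT.exists_arc hv0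
      exact absurd (hall u hu) (Nat.not_lt_zero _)
    | succ m =>
      have : v ∈ F.canonTop (F.phiTC T) (m + 1) := by
        rw [hT.mem_canonTop_succ_iff]
        refine ⟨hv0, ?_, ?_, fun u hu => hT.mem_toppledBefore_iff.mpr (hall u hu)⟩
        · rw [hrow, h]
          simp [Nat.even_add]
        · rw [hT.mem_toppledBefore_iff]
          omega
      have := hT.mem_canonTop_iff.mp this
      omega
  refine ⟨u, huv, ?_⟩
  have hlt := hT.bIdx_lt_of_arc huv
  have hpar := huv.adj.mem_rows_iff
  rw [hrow, hT.mem_rows_iff_even_bIdx u, Nat.even_iff, Nat.even_iff] at hpar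
  omega

end Ferrers

/-- **Lemma, part (b).** If the column vertex `j` lies in `Vˡ`
(`= canonTop (2l - 1)`) and `k` is a row vertex with `k < j`, then `k ∈ U^{l-1}`
(`= canonTop (2l - 2)`) if and only if `S_{kj} = 1` and this `1` is not a
cornersupport entry. -/
theorem mem_U_iff_noncornersupport_one {n : ℕ} (F : Ferrers n)
    (T : Fin (n + 1) → Fin (n + 1) → Bool) (hT : F.IsEW T)
    (j k : Fin (n + 1)) (hj : j ∉ F.rows) (hk : k ∈ F.rows) (hkj : k < j)
    (l : ℕ) (hjV : j ∈ F.canonTop (F.phiTC T) (2 * l - 1)) :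
    k ∈ F.canonTop (F.phiTC T) (2 * l - 2) ↔
      F.suppS T k j = true ∧ ¬F.Cornersupport T k j := by
  have hjb := hT.mem_canonTop_iff.mp hjV
  have hjpar := hT.mem_rows_iff_even_bIdx j
  have hkpar := hT.mem_rows_iff_even_bIdx k
  simp only [hj, hk, false_iff, true_iff, Nat.even_iff] at hjpar hkpar
  have hcell := hT.suppS_eq (i := k) (j := j) ⟨hk, hj, hkj⟩
  rw [hT.mem_canonTop_iff]
  constructor
  · intro hkb
    have hS : F.suppS T k j = true := Ferrers.suppS_eq_true_iff.mpr (by omega)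
    refine ⟨hS, ?_⟩
    rintro ⟨j', k', -, -, -, -, h1, h2, h3⟩
    rw [← hcell, hS] at h1 h2 h3
    rw [Bool.not_true, Ferrers.suppS_eq_false_iff] at h1
    rw [Ferrers.suppS_eq_true_iff] at h2 h3
    omega
  · rintro ⟨hS, hcs⟩
    have hlt := Ferrers.suppS_eq_true_iff.mp hS
    by_contra hne
    obtain ⟨m, rfl⟩ : ∃ m, l = m + 2 := ⟨l - 2, by omega⟩
    obtain ⟨r, hrj, hr⟩ := hT.exists_bIdx_eq_succ (v := j) (m := 2 * m + 1) (by omega)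
    obtain ⟨s, hsr, hs⟩ := hT.exists_bIdx_eq_succ (v := r) (m := 2 * m) (by omega)
    refine hcs ⟨r, s, ?_, ?_, ?_, ?_, ?_, ?_, ?_⟩
    · rw [hrj.adj.mem_rows_iff]
      exact hj
    · rw [hT.mem_rows_iff_even_bIdx, hs, Nat.even_iff]
      omega
    · rintro rfl
      omega
    · rintro rfl
      omega
    · rw [← hcell, hS, Bool.not_true, Ferrers.suppS_eq_false_iff]
      omega
    · rw [← hcell, hS, Ferrers.suppS_eq_true_iff]
      omega
    · rw [← hcell, hS, Ferrers.suppS_eq_true_iff]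
      omega
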